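/- arXiv:1508.05892 — 2 statements merged into one kernel-verified Lean document; each statement's English description precedes it below -/
import Mathlib

section
/- Every maximal commuting class in U^{(p²)} is generated by a pair of independent operators: if C is a maximal commuting class, then there exist independent, commuting elements U₁, U₂ ∈ C such that C = {U₁^{∘k} ∘ U₂^{∘l} : (k,l) ∈ (Z/p)² \ {(0,0)}}. In particular, C is closed under the operation ∘ and under taking ∘-powers. -/
/-!
Label the operator `(X^m Z^n) ⊗ (X^k Z^l)` by the vector `((m, n), (k, l))` of the four-dimensional
space `LabelSpace p` over `ZMod p`. Since `Z X = ω X Z`, multiplication of operators is addition of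
labels up to a power of `ω` (`pauli_mul`), so that `∘` becomes addition and `∘`-powers become scalar
multiples (`circ_pauli`, `cpow_pauli`). Distinct labels give non-proportional matrices
(`eq_of_pauli_eq_smul`), and two operators commute only if their labels are orthogonal for the
standard symplectic form (`symp_eq_zero_of_commute`).

The labels of a maximal commuting class thus form a set of `p ^ 2 - 1` nonzero, pairwise orthogonal
vectors. Their span is totally isotropic for a nondegenerate form on a four-dimensional space, so it
has dimension at most two and at most `p ^ 2` elements. By counting, the labels together with `0` fill
the whole span (`isotropic_of_card`), which is a plane. A basis of that plane labels the two
generators, and the closure properties are those of a subspace.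
-/

open Matrix
open scoped Kronecker

noncomputable section

/-- ω = exp(2πi/p), a primitive p-th root of unity. -/
def omega_p (p : ℕ) : ℂ := Complex.exp (2 * Real.pi * Complex.I / p)

/-- Generalized Pauli X on ℂ^p : X e_j = e_{j+1}. -/
def genX (p : ℕ) : Matrix (ZMod p) (ZMod p) ℂ :=
  Matrix.of fun i j => if i = j + 1 then 1 else 0

/-- Generalized Pauli Z on ℂ^p : Z e_j = ω^j e_j. -/
def genZ (p : ℕ) : Matrix (ZMod p) (ZMod p) ℂ :=
  Matrix.of fun i j => if i = j then omega_p p ^ j.val else 0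

/-- The space of p² × p² complex matrices. -/
abbrev PauliMat (p : ℕ) := Matrix (ZMod p × ZMod p) (ZMod p × ZMod p) ℂ

/-- The set U^{(p²)} of p⁴ two-particle generalized Pauli operators
    (X^m Z^n) ⊗ (X^k Z^l), with m,n,k,l ∈ {0,…,p−1}. -/
def PauliSet (p : ℕ) [NeZero p] : Set (PauliMat p) :=
  { U | ∃ m n k l : ZMod p,
      U = (genX p ^ m.val * genZ p ^ n.val) ⊗ₖ (genX p ^ k.val * genZ p ^ l.val) }

/-- A maximal commuting class: a subset of U^{(p²)} \ {I} of cardinality p² − 1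
    whose elements pairwise commute. -/
def MaxCommClass (p : ℕ) [NeZero p] (C : Set (PauliMat p)) : Prop :=
  C ⊆ PauliSet p \ {1} ∧ C.ncard = p ^ 2 - 1 ∧ ∀ U ∈ C, ∀ V ∈ C, Commute U V

/-- U ∘ V: the unique element of U^{(p²)} such that U·V is a power of ω times it. -/
def circ (p : ℕ) [NeZero p] (U V : PauliMat p) : PauliMat p :=
  @Classical.epsilon _ ⟨(0 : PauliMat p)⟩
    fun W => W ∈ PauliSet p ∧ ∃ j : ℕ, U * V = omega_p p ^ j • W

/-- U^{∘k}: the unique element of U^{(p²)} such that the matrix power U^k is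
    a power of ω times it. -/
def cpow (p : ℕ) [NeZero p] (U : PauliMat p) (k : ZMod p) : PauliMat p :=
  @Classical.epsilon _ ⟨(0 : PauliMat p)⟩
    fun W => W ∈ PauliSet p ∧ ∃ j : ℕ, U ^ k.val = omega_p p ^ j • W

/-- Independence: U^k is not a scalar multiple of V^l for any (k,l) ≠ (0,0). -/
def Indep (p : ℕ) [NeZero p] (U V : PauliMat p) : Prop :=
  ∀ k l : ZMod p, (k, l) ≠ (0, 0) → ∀ c : ℂ, U ^ k.val ≠ c • V ^ l.val

/-- The class ⟨U,V⟩ generated by a pair of independent commuting operators: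
    {U^{∘k} ∘ V^{∘l} : (k,l) ≠ (0,0)}. -/
def genClass (p : ℕ) [NeZero p] (U V : PauliMat p) : Set (PauliMat p) :=
  { W | ∃ k l : ZMod p, (k, l) ≠ (0, 0) ∧ W = circ p (cpow p U k) (cpow p V l) }

/-- A complete set of p² + 1 pairwise disjoint maximal commuting classes. -/
def CompleteSet (p : ℕ) [NeZero p] (S : Set (Set (PauliMat p))) : Prop :=
  S.ncard = p ^ 2 + 1 ∧ (∀ C ∈ S, MaxCommClass p C) ∧ S.Pairwise Disjoint

/-- A family of classes is unextendible if no maximal commuting class is contained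
    in U^{(p²)} \ ({I} ∪ ⋃ F). -/
def Unextendible (p : ℕ) [NeZero p] (F : Set (Set (PauliMat p))) : Prop :=
  ¬ ∃ C : Set (PauliMat p), MaxCommClass p C ∧ C ⊆ PauliSet p \ ({1} ∪ ⋃₀ F)

/-! ### Labels and matrix entries -/

/-- The additive character `j ↦ ω ^ j` of `ZMod p`; it turns congruences of exponents into equalities of
phases and back. -/
local notation "χ" => ZMod.stdAddChar

/-- The space of labels `((m, n), (k, l))` of the operators `(X^m Z^n) ⊗ (X^k Z^l)`. -/
abbrev LabelSpace (p : ℕ) := (ZMod p × ZMod p) × (ZMod p × ZMod p)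

/-- The one-particle operator `X^m Z^n` with label `a = (m, n)`. -/
def pauliOne (p : ℕ) [NeZero p] (a : ZMod p × ZMod p) : Matrix (ZMod p) (ZMod p) ℂ :=
  genX p ^ a.1.val * genZ p ^ a.2.val

/-- The two-particle operator with label `v`. -/
def pauli (p : ℕ) [NeZero p] (v : LabelSpace p) : PauliMat p :=
  pauliOne p v.1 ⊗ₖ pauliOne p v.2

lemma omega_p_pow_val (p : ℕ) [NeZero p] (a : ZMod p) : omega_p p ^ a.val = χ a := by
  rw [ZMod.stdAddChar_apply, ZMod.toCircle_apply, omega_p, ← Complex.exp_nat_mul]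
  congr 1
  ring

lemma stdAddChar_ne_zero (p : ℕ) [NeZero p] (a : ZMod p) : (χ a : ℂ) ≠ 0 := by
  rw [ZMod.stdAddChar_apply]
  exact Circle.coe_ne_zero _

lemma genX_pow_apply (p : ℕ) [NeZero p] (k : ℕ) (i j : ZMod p) :
    (genX p ^ k) i j = if i = j + k then 1 else 0 := by
  induction k generalizing i j with
  | zero => simp [Matrix.one_apply]
  | succ k ih =>
    have hX (l : ZMod p) : genX p l j = if l = j + 1 then 1 else 0 := rfl
    rw [pow_succ, Matrix.mul_apply]
    simp only [ih, hX, mul_ite, mul_one, mul_zero, Finset.sum_ite_eq', Finset.mem_univ, if_true]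
    push_cast
    rw [add_assoc, add_comm (1 : ZMod p)]

lemma genZ_eq_diagonal (p : ℕ) [NeZero p] : genZ p = Matrix.diagonal fun j => χ j := by
  ext i j
  by_cases h : i = j
  · simp [genZ, h, omega_p_pow_val]
  · simp [genZ, h]

lemma pauliOne_apply (p : ℕ) [NeZero p] (a : ZMod p × ZMod p) (i j : ZMod p) :
    pauliOne p a i j = if i = j + a.1 then χ (a.2 * j) else 0 := by
  have hχ : (χ j : ℂ) ^ a.2.val = χ (a.2 * j) := by
    rw [← AddChar.map_nsmul_eq_pow, nsmul_eq_mul, ZMod.natCast_zmod_val]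
  rw [pauliOne, genZ_eq_diagonal, Matrix.diagonal_pow, Matrix.mul_diagonal, genX_pow_apply]
  simp [hχ]

lemma pauliOne_mul (p : ℕ) [NeZero p] (a b : ZMod p × ZMod p) :
    pauliOne p a * pauliOne p b = (χ (a.2 * b.1) : ℂ) • pauliOne p (a + b) := by
  ext i j
  rw [Matrix.mul_apply, Matrix.smul_apply]
  simp only [pauliOne_apply, mul_ite, mul_zero, Finset.sum_ite_eq',
    Finset.mem_univ, if_true, Prod.fst_add, Prod.snd_add, smul_eq_mul, ite_mul, zero_mul]
  rw [show j + (a.1 + b.1) = j + b.1 + a.1 by ring]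
  split_ifs with h
  · rw [← AddChar.map_add_eq_mul, ← AddChar.map_add_eq_mul]
    congr 1
    ring
  · rfl

/-- Moving the `Z`-part of the left factor past the `X`-part of the right one costs the phase
`χ (v.1.2 * w.1.1 + v.2.2 * w.2.1)`. -/
lemma pauli_mul (p : ℕ) [NeZero p] (v w : LabelSpace p) :
    pauli p v * pauli p w = (χ (v.1.2 * w.1.1 + v.2.2 * w.2.1) : ℂ) • pauli p (v + w) := by
  rw [pauli, pauli, ← Matrix.mul_kronecker_mul, pauliOne_mul, pauliOne_mul, Matrix.smul_kronecker,
    Matrix.kronecker_smul, smul_smul, ← AddChar.map_add_eq_mul]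
  rfl

lemma pauli_zero (p : ℕ) [NeZero p] : pauli p 0 = 1 := by
  simp [pauli, pauliOne]

lemma pauli_pow (p : ℕ) [NeZero p] (v : LabelSpace p) (k : ℕ) :
    ∃ a : ZMod p, pauli p v ^ k = (χ a : ℂ) • pauli p (k • v) := by
  induction k with
  | zero => exact ⟨0, by simp [pauli_zero]⟩
  | succ k ih =>
    obtain ⟨a, ha⟩ := ih
    refine ⟨a + ((k • v).1.2 * v.1.1 + (k • v).2.2 * v.2.1), ?_⟩
    rw [pow_succ, ha, smul_mul_assoc, pauli_mul, smul_smul, ← AddChar.map_add_eq_mul, succ_nsmul]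

lemma pauli_pow_val (p : ℕ) [NeZero p] (v : LabelSpace p) (k : ZMod p) :
    ∃ a : ZMod p, pauli p v ^ k.val = (χ a : ℂ) • pauli p (k • v) := by
  have h : k.val • v = k • v := by
    rw [← Nat.cast_smul_eq_nsmul (ZMod p), ZMod.natCast_zmod_val]
  exact h ▸ pauli_pow p v k.val

lemma pauli_apply (p : ℕ) [NeZero p] (v : LabelSpace p) (i j : ZMod p × ZMod p) :
    pauli p v i j = if i = (j.1 + v.1.1, j.2 + v.2.1) then (χ (v.1.2 * j.1 + v.2.2 * j.2) : ℂ)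
      else 0 := by
  rw [pauli, Matrix.kronecker_apply, pauliOne_apply, pauliOne_apply, AddChar.map_add_eq_mul]
  by_cases h₁ : i.1 = j.1 + v.1.1 <;> by_cases h₂ : i.2 = j.2 + v.2.1 <;>
    simp [Prod.ext_iff, h₁, h₂]

/-- Proportional Pauli operators are equal, and the factor is `1`: the column of `(0, 0)` determines
the `X`-exponents and the factor, the columns of `(1, 0)` and `(0, 1)` the `Z`-exponents. -/
lemma eq_of_pauli_eq_smul (p : ℕ) [NeZero p] {v w : LabelSpace p} {c : ℂ}
    (h : pauli p v = c • pauli p w) : v = w ∧ c = 1 := by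
  obtain ⟨⟨m, n⟩, ⟨k, l⟩⟩ := v
  obtain ⟨⟨m', n'⟩, ⟨k', l'⟩⟩ := w
  have key (i j : ZMod p × ZMod p) := congrFun (congrFun h i) j
  simp only [Matrix.smul_apply, pauli_apply, smul_eq_mul] at key
  have h0 := key (m, k) (0, 0)
  have hX : m = m' ∧ k = k' := by
    by_contra hne
    simp [hne] at h0
  obtain ⟨rfl, rfl⟩ := hX
  have hc : c = 1 := by simpa using h0.symm
  subst hc
  have h1 := key (1 + m, k) (1, 0)
  have h2 := key (m, 1 + k) (0, 1)
  simp only [zero_add, mul_one, mul_zero, add_zero, if_true, one_mul] at h1 h2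
  rw [ZMod.injective_stdAddChar h1, ZMod.injective_stdAddChar h2]
  exact ⟨rfl, rfl⟩

lemma pauli_injective (p : ℕ) [NeZero p] : Function.Injective (pauli p) := fun v w h =>
  (eq_of_pauli_eq_smul p (c := 1) (by rw [one_smul, h])).1

lemma mem_pauliSet (p : ℕ) [NeZero p] (U : PauliMat p) :
    U ∈ PauliSet p ↔ ∃ v, pauli p v = U := by
  constructor
  · rintro ⟨m, n, k, l, rfl⟩
    exact ⟨((m, n), (k, l)), rfl⟩
  · rintro ⟨v, rfl⟩
    exact ⟨_, _, _, _, rfl⟩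

/-- A matrix of the form `χ a • pauli p v` is a power of `ω` times exactly one Pauli operator, namely
`pauli p v`; this evaluates the choice operator in `circ` and `cpow`. -/
lemma epsilon_pauli (p : ℕ) [NeZero p] {M : PauliMat p} {a : ZMod p} {v : LabelSpace p}
    (hM : M = (χ a : ℂ) • pauli p v) :
    @Classical.epsilon _ ⟨(0 : PauliMat p)⟩
      (fun W => W ∈ PauliSet p ∧ ∃ j : ℕ, M = omega_p p ^ j • W) = pauli p v := by
  have hex : ∃ W, W ∈ PauliSet p ∧ ∃ j : ℕ, M = omega_p p ^ j • W :=
    ⟨pauli p v, (mem_pauliSet p _).2 ⟨v, rfl⟩, a.val, by rw [omega_p_pow_val, hM]⟩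
  obtain ⟨hmem, j, hj⟩ := Classical.epsilon_spec hex
  obtain ⟨w, hw⟩ := (mem_pauliSet p _).1 hmem
  rw [← hw]
  rw [← hw, hM] at hj
  have hχ : (χ a : ℂ) ≠ 0 := stdAddChar_ne_zero p _
  have : pauli p v = ((χ a : ℂ)⁻¹ * omega_p p ^ j) • pauli p w := by
    rw [mul_smul, ← hj, inv_smul_smul₀ hχ]
  rw [(eq_of_pauli_eq_smul p this).1]

lemma circ_pauli (p : ℕ) [NeZero p] (v w : LabelSpace p) :
    circ p (pauli p v) (pauli p w) = pauli p (v + w) :=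
  epsilon_pauli p (pauli_mul p v w)

lemma cpow_pauli (p : ℕ) [NeZero p] (v : LabelSpace p) (k : ZMod p) :
    cpow p (pauli p v) k = pauli p (k • v) :=
  epsilon_pauli p (pauli_pow_val p v k).choose_spec

/-! ### The symplectic form -/

/-- The standard symplectic form on labels: `n m' + l k' - (n' m + l' k)` for the labels
`((m, n), (k, l))` and `((m', n'), (k', l'))`. -/
def symp (p : ℕ) : LinearMap.BilinForm (ZMod p) (LabelSpace p) :=
  LinearMap.mk₂ (ZMod p)
    (fun v w => v.1.2 * w.1.1 + v.2.2 * w.2.1 - (w.1.2 * v.1.1 + w.2.2 * v.2.1))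
    (fun _ _ _ => by simp only [Prod.fst_add, Prod.snd_add]; ring)
    (fun _ _ _ => by simp only [Prod.smul_fst, Prod.smul_snd, smul_eq_mul]; ring)
    (fun _ _ _ => by simp only [Prod.fst_add, Prod.snd_add]; ring)
    (fun _ _ _ => by simp only [Prod.smul_fst, Prod.smul_snd, smul_eq_mul]; ring)

lemma symp_apply (p : ℕ) (v w : LabelSpace p) :
    symp p v w = v.1.2 * w.1.1 + v.2.2 * w.2.1 - (w.1.2 * v.1.1 + w.2.2 * v.2.1) := rfl

lemma symp_eq_zero_of_commute (p : ℕ) [NeZero p] {v w : LabelSpace p}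
    (h : Commute (pauli p v) (pauli p w)) : symp p v w = 0 := by
  have h' := h.eq
  rw [pauli_mul, pauli_mul, add_comm w v] at h'
  have hχ : (χ (v.1.2 * w.1.1 + v.2.2 * w.2.1) : ℂ) ≠ 0 := stdAddChar_ne_zero p _
  have h1 : pauli p (v + w) = ((χ (v.1.2 * w.1.1 + v.2.2 * w.2.1) : ℂ)⁻¹ *
      χ (w.1.2 * v.1.1 + w.2.2 * v.2.1)) • pauli p (v + w) := by
    rw [mul_smul, ← h', inv_smul_smul₀ hχ]
  have h2 := (eq_of_pauli_eq_smul p h1).2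
  rw [inv_mul_eq_one₀ hχ] at h2
  rw [symp_apply, ZMod.injective_stdAddChar h2, sub_self]

lemma symp_nondegenerate (p : ℕ) : (symp p).Nondegenerate := by
  constructor
  · intro v hv
    have h1 := hv ((1, 0), (0, 0))
    have h2 := hv ((0, 1), (0, 0))
    have h3 := hv ((0, 0), (1, 0))
    have h4 := hv ((0, 0), (0, 1))
    simp [symp_apply] at h1 h2 h3 h4
    ext <;> assumption
  · intro v hv
    have h1 := hv ((1, 0), (0, 0))
    have h2 := hv ((0, 1), (0, 0))
    have h3 := hv ((0, 0), (1, 0))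
    have h4 := hv ((0, 0), (0, 1))
    simp [symp_apply] at h1 h2 h3 h4
    ext <;> assumption

/-- A set of `p ^ 2 - 1` nonzero, pairwise orthogonal labels consists of the nonzero vectors of a
plane: its span `W` lies in its own orthogonal complement, so `2 * dim W ≤ 4`. -/
lemma isotropic_of_card (p : ℕ) [Fact p.Prime] (S : Set (LabelSpace p)) (h0 : (0 : LabelSpace p) ∉ S)
    (hcard : S.ncard = p ^ 2 - 1) (hS : ∀ v ∈ S, ∀ w ∈ S, symp p v w = 0) :
    ∃ W : Submodule (ZMod p) (LabelSpace p),
      Module.finrank (ZMod p) W = 2 ∧ insert 0 S = (W : Set (LabelSpace p)) := by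
  set W := Submodule.span (ZMod p) S with hW
  have hp := (Fact.out : p.Prime)
  have hle : W ≤ (symp p).orthogonal W := by
    have h1 : ∀ v ∈ S, W ≤ LinearMap.ker (symp p v) := fun v hv =>
      Submodule.span_le.2 fun w hw => hS v hv w hw
    intro w hw
    rw [LinearMap.BilinForm.mem_orthogonal_iff]
    have h2 : W ≤ LinearMap.ker ((symp p).flip w) :=
      Submodule.span_le.2 fun v hv => h1 v hv hw
    exact fun v hv => h2 hv
  have hdim : Module.finrank (ZMod p) W ≤ 2 := by
    have h1 := Submodule.finrank_mono hle
    rw [LinearMap.BilinForm.finrank_orthogonal (symp_nondegenerate p)] at h1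
    have h2 : Module.finrank (ZMod p) (LabelSpace p) = 4 := by simp
    omega
  have hWcard : (W : Set (LabelSpace p)).ncard = p ^ Module.finrank (ZMod p) W := by
    rw [← Nat.card_coe_set_eq]
    simpa using Module.natCard_eq_pow_finrank (K := ZMod p) (V := W)
  have hsub : insert 0 S ⊆ (W : Set (LabelSpace p)) :=
    Set.insert_subset W.zero_mem Submodule.subset_span
  have hins : (insert 0 S).ncard = p ^ 2 := by
    rw [Set.ncard_insert_of_notMem h0, hcard, Nat.sub_add_cancel (Nat.one_le_pow _ _ hp.pos)]
  have hge : p ^ 2 ≤ p ^ Module.finrank (ZMod p) W := by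
    rw [← hins, ← hWcard]
    exact Set.ncard_le_ncard hsub
  have h2 : Module.finrank (ZMod p) W = 2 :=
    le_antisymm hdim ((Nat.pow_le_pow_iff_right hp.one_lt).1 hge)
  exact ⟨W, h2, Set.eq_of_subset_of_ncard_le hsub (by rw [hWcard, h2, hins])⟩

/-! ### Maximal commuting classes -/

/-- Operators with linearly independent labels are independent. -/
lemma indep_pauli (p : ℕ) [NeZero p] {v w : LabelSpace p}
    (h : ∀ k l : ZMod p, k • v + l • w = 0 → k = 0 ∧ l = 0) :
    Indep p (pauli p v) (pauli p w) := by
  intro k l hkl c hc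
  obtain ⟨a, ha⟩ := pauli_pow_val p v k
  obtain ⟨b, hb⟩ := pauli_pow_val p w l
  have hχ : (χ a : ℂ) ≠ 0 := stdAddChar_ne_zero p _
  have h1 : pauli p (k • v) = ((χ a : ℂ)⁻¹ * (c * χ b)) • pauli p (l • w) := by
    rw [mul_smul, mul_smul, ← hb, ← hc, ha, inv_smul_smul₀ hχ]
  have h2 := (eq_of_pauli_eq_smul p h1).1
  obtain ⟨hk, hl⟩ := h k (-l) (by rw [h2, neg_smul, add_neg_cancel])
  exact hkl (by rw [hk, neg_eq_zero.1 hl])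

/-- The labels of a maximal commuting class are the nonzero vectors of a plane. -/
lemma MaxCommClass.exists_plane (p : ℕ) [NeZero p] (hp : p.Prime) {C : Set (PauliMat p)}
    (hC : MaxCommClass p C) :
    haveI := Fact.mk hp
    ∃ W : Submodule (ZMod p) (LabelSpace p), Module.finrank (ZMod p) W = 2 ∧
      ∀ U, U ∈ C ↔ ∃ v ∈ W, v ≠ 0 ∧ pauli p v = U := by
  have := Fact.mk hp
  obtain ⟨hsub, hcard, hcomm⟩ := hC
  have h0 : (0 : LabelSpace p) ∉ pauli p ⁻¹' C := fun h => (hsub h).2 (pauli_zero p)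
  obtain ⟨W, hW, hSW⟩ := isotropic_of_card p (pauli p ⁻¹' C) h0
    (by
      rw [Set.ncard_preimage_of_injective_subset_range (pauli_injective p)
        (fun U hU => (mem_pauliSet p U).1 (hsub hU).1), hcard])
    (fun v hv w hw => symp_eq_zero_of_commute p (hcomm _ hv _ hw))
  have hmem (v : LabelSpace p) : v ∈ W ↔ v = 0 ∨ pauli p v ∈ C := by
    rw [← SetLike.mem_coe, ← hSW]
    rfl
  refine ⟨W, hW, fun U => ⟨fun hU => ?_, ?_⟩⟩
  · obtain ⟨v, rfl⟩ := (mem_pauliSet p U).1 (hsub hU).1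
    exact ⟨v, (hmem v).2 (Or.inr hU), fun hv => h0 (hv ▸ hU), rfl⟩
  · rintro ⟨v, hv, hv0, rfl⟩
    exact ((hmem v).1 hv).resolve_left hv0

/-- Every maximal commuting class in U^{(p²)} is generated by a pair of
independent operators; in particular it is closed (up to the identity) under ∘ and
under taking ∘-powers. -/
theorem stmt0 (p : ℕ) [NeZero p] (hp : p.Prime) (C : Set (PauliMat p))
    (hC : MaxCommClass p C) :
    (∃ U₁ ∈ C, ∃ U₂ ∈ C,
        Indep p U₁ U₂ ∧ Commute U₁ U₂ ∧ C = genClass p U₁ U₂) ∧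
    (∀ U ∈ C, ∀ V ∈ C, circ p U V ∈ C ∪ {1}) ∧
    (∀ U ∈ C, ∀ k : ZMod p, cpow p U k ∈ C ∪ {1}) := by
  have := Fact.mk hp
  obtain ⟨W, hW, hmem⟩ := hC.exists_plane p hp
  have hmem' : ∀ v ∈ W, pauli p v ∈ C ∪ {1} := by
    intro v hv
    by_cases h : v = 0
    · exact Or.inr (by rw [h, pauli_zero]; rfl)
    · exact Or.inl ((hmem _).2 ⟨v, hv, h, rfl⟩)
  refine ⟨?_, ?_, ?_⟩
  · let b := Module.finBasisOfFinrankEq (ZMod p) W hW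
    have hlin : ∀ k l : ZMod p,
        k • (b 0 : LabelSpace p) + l • (b 1 : LabelSpace p) = 0 → k = 0 ∧ l = 0 := by
      intro k l h
      have h' : ∑ i, ![k, l] i • b i = 0 := by
        rw [Fin.sum_univ_two]
        exact Subtype.ext h
      have h'' := Fintype.linearIndependent_iff.1 b.linearIndependent _ h'
      exact ⟨h'' 0, h'' 1⟩
    have hC0 : pauli p (b 0) ∈ C :=
      (hmem _).2 ⟨_, (b 0).2, fun h => b.ne_zero 0 (Subtype.ext h), rfl⟩
    have hC1 : pauli p (b 1) ∈ C :=
      (hmem _).2 ⟨_, (b 1).2, fun h => b.ne_zero 1 (Subtype.ext h), rfl⟩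
    refine ⟨_, hC0, _, hC1, indep_pauli p hlin, hC.2.2 _ hC0 _ hC1, ?_⟩
    ext U
    rw [hmem]
    simp only [genClass, cpow_pauli, circ_pauli, Set.mem_ofPred_eq]
    constructor
    · rintro ⟨v, hv, hv0, rfl⟩
      have hsum : b.repr ⟨v, hv⟩ 0 • (b 0 : LabelSpace p) + b.repr ⟨v, hv⟩ 1 • (b 1 : LabelSpace p)
          = v := by
        have := b.sum_repr ⟨v, hv⟩
        rw [Fin.sum_univ_two] at this
        exact congrArg Subtype.val this
      refine ⟨_, _, fun h => hv0 ?_, congrArg (pauli p) hsum.symm⟩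
      obtain ⟨h1, h2⟩ := Prod.mk.inj h
      rw [← hsum, h1, h2, zero_smul, zero_smul, add_zero]
    · rintro ⟨k, l, hkl, rfl⟩
      refine ⟨_, W.add_mem (W.smul_mem k (b 0).2) (W.smul_mem l (b 1).2), fun h => hkl ?_, rfl⟩
      obtain ⟨rfl, rfl⟩ := hlin k l h
      rfl
  · intro U hU V hV
    obtain ⟨v, hv, -, rfl⟩ := (hmem U).1 hU
    obtain ⟨w, hw, -, rfl⟩ := (hmem V).1 hV
    rw [circ_pauli]
    exact hmem' _ (W.add_mem hv hw)
  · intro U hU k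
    obtain ⟨v, hv, -, rfl⟩ := (hmem U).1 hU
    rw [cpow_pauli]
    exact hmem' _ (W.smul_mem k hv)
end
end

section
/- Let C₁ and C₂ be disjoint maximal commuting classes in U^{(p²)}. Then every element U ∈ C₁ commutes with exactly p−1 of the elements of C₂. -/
/-!
The Pauli operators are parametrised by the four-dimensional space `PhaseSpace p` over `ZMod p`:
`pauliOf a * pauliOf b` is a nonzero multiple of `pauliOf (a + b)`, and `pauliOf a`, `pauliOf b`
commute exactly when `a`, `b` are orthogonal for the standard symplectic form `sympl`
(`commute_pauliOf_iff`).

The span of an isotropic set is an isotropic subspace, hence has dimension at most two, so an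
isotropic set has at most `p ^ 2` elements (`isotropic_ncard_le`). A maximal commuting class
together with the identity corresponds to an isotropic set `A` with exactly `p ^ 2` elements; such a
set is equal to its span, a Lagrangian plane. If `u ∉ A`, the functional `sympl u` does not vanish
on `A`, as otherwise `insert u A` would be an isotropic set of `p ^ 2 + 1` elements. Its kernel in
`A` is therefore a line, with `p - 1` nonzero elements (`ncard_orthogonal_inter`). This is the
count required for `u` the vector of an element of the other class.
-/

open Matrix
open scoped Kronecker

noncomputable section

/-! ### Phase space and its symplectic form -/

/-- The discrete phase space: `((m, k), (n, l))` stands for `(X^m Z^n) ⊗ (X^k Z^l)`, so the first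
component holds the two shift exponents and the second the two phase exponents. -/
abbrev PhaseSpace (p : ℕ) := (ZMod p × ZMod p) × (ZMod p × ZMod p)

/-- The dot product on `(ZMod p)²`. -/
def dot2 {p : ℕ} (x y : ZMod p × ZMod p) : ZMod p := x.1 * y.1 + x.2 * y.2

/-- The Pauli operator of a phase space point, by its entries: `e_j ↦ χ(j · r) e_{j + q}` for the
point `(q, r)`, where `χ x = exp (2πi x / p)`. -/
def pauliOf {p : ℕ} [NeZero p] (a : PhaseSpace p) : PauliMat p :=
  Matrix.of fun i j => if i = j + a.1 then ZMod.stdAddChar (dot2 j a.2) else 0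

/-- The standard symplectic form on phase space. -/
def sympl (p : ℕ) : LinearMap.BilinForm (ZMod p) (PhaseSpace p) :=
  LinearMap.mk₂ (ZMod p) (fun a b => dot2 b.1 a.2 - dot2 a.1 b.2)
    (by intros; simp [dot2]; ring) (by intros; simp [dot2]; ring)
    (by intros; simp [dot2]; ring) (by intros; simp [dot2]; ring)

lemma sympl_apply {p : ℕ} (a b : PhaseSpace p) :
    sympl p a b = dot2 b.1 a.2 - dot2 a.1 b.2 := rfl

lemma sympl_self {p : ℕ} (a : PhaseSpace p) : sympl p a a = 0 := by
  simp [sympl_apply]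

lemma sympl_swap {p : ℕ} (a b : PhaseSpace p) : sympl p a b = - sympl p b a := by
  simp [sympl_apply]

/-! ### Pauli operators as images of phase space points -/

section Operators

variable {p : ℕ} [NeZero p]

lemma omega_p_pow (j : ℕ) : omega_p p ^ j = ZMod.stdAddChar (j : ZMod p) := by
  have h := ZMod.stdAddChar_coe (N := p) (j : ℤ)
  rw [Int.cast_natCast] at h
  rw [h, omega_p, ← Complex.exp_nat_mul]
  congr 1
  push_cast
  ring

lemma genX_pow (m : ℕ) :
    genX p ^ m = Matrix.of fun i j => if i = j + (m : ZMod p) then 1 else 0 := by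
  induction m with
  | zero => ext i j; simp [Matrix.one_apply]
  | succ m ih =>
    ext i j
    rw [pow_succ, ih, Matrix.mul_apply]
    simp [genX, add_comm, add_left_comm]

lemma genZ_pow (n : ℕ) :
    genZ p ^ n = Matrix.of fun i j => if i = j then ZMod.stdAddChar (j * (n : ZMod p)) else 0 := by
  have h : genZ p = Matrix.diagonal fun j => omega_p p ^ j.val := by
    ext i j
    by_cases hij : i = j <;> simp [genZ, Matrix.diagonal, hij]
  rw [h, Matrix.diagonal_pow]
  ext i j
  by_cases hij : i = j
  · subst hij
    simp only [Matrix.diagonal_apply_eq, Pi.pow_apply, Matrix.of_apply, if_true]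
    rw [← pow_mul, omega_p_pow]
    simp
  · simp [hij]

lemma kronecker_eq_pauliOf (m n k l : ZMod p) :
    (genX p ^ m.val * genZ p ^ n.val) ⊗ₖ (genX p ^ k.val * genZ p ^ l.val)
      = pauliOf ((m, k), (n, l)) := by
  ext ⟨i, i'⟩ ⟨j, j'⟩
  rw [Matrix.kronecker_apply, genX_pow, genX_pow, genZ_pow, genZ_pow, Matrix.mul_apply,
    Matrix.mul_apply]
  by_cases h : i = j + m <;> by_cases h' : i' = j' + k <;>
    simp [pauliOf, dot2, h, h', AddChar.map_add_eq_mul]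

lemma pauliSet_eq_range : PauliSet p = Set.range (pauliOf (p := p)) := by
  ext U
  constructor
  · rintro ⟨m, n, k, l, rfl⟩
    exact ⟨_, (kronecker_eq_pauliOf m n k l).symm⟩
  · rintro ⟨⟨⟨m, k⟩, ⟨n, l⟩⟩, rfl⟩
    exact ⟨m, n, k, l, (kronecker_eq_pauliOf m n k l).symm⟩

lemma pauliOf_zero : pauliOf (0 : PhaseSpace p) = 1 := by
  ext i j
  simp [pauliOf, dot2, Matrix.one_apply]

lemma stdAddChar_ne_zero_s2 (x : ZMod p) : (ZMod.stdAddChar x : ℂ) ≠ 0 :=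
  (AddChar.val_isUnit ZMod.stdAddChar x).ne_zero

lemma pauliOf_ne_zero (a : PhaseSpace p) : pauliOf a ≠ 0 := by
  intro h
  have := congrFun (congrFun h (0 + a.1)) 0
  simp [pauliOf, stdAddChar_ne_zero_s2] at this

lemma pauliOf_injective : Function.Injective (pauliOf (p := p)) := by
  intro a b h
  have key (j : ZMod p × ZMod p) := congrFun (congrFun h (j + a.1)) j
  have h1 : a.1 = b.1 := by
    by_contra hne
    have := key 0
    simp [pauliOf, hne, stdAddChar_ne_zero_s2] at this
  have h2 (j : ZMod p × ZMod p) : dot2 j a.2 = dot2 j b.2 := by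
    apply ZMod.injective_stdAddChar
    simpa [pauliOf, h1] using key j
  refine Prod.ext h1 (Prod.ext ?_ ?_)
  · simpa [dot2] using h2 (1, 0)
  · simpa [dot2] using h2 (0, 1)

lemma pauliOf_mul (a b : PhaseSpace p) :
    pauliOf a * pauliOf b = (ZMod.stdAddChar (dot2 b.1 a.2) : ℂ) • pauliOf (a + b) := by
  ext i j
  rw [Matrix.mul_apply, Finset.sum_eq_single (j + b.1)]
  · have e : j + b.1 + a.1 = j + (a + b).1 := by simp [add_comm, add_left_comm]
    by_cases h : i = j + (a + b).1
    · simp only [pauliOf, Matrix.of_apply, Matrix.smul_apply, e, h, if_true, smul_eq_mul,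
        ← AddChar.map_add_eq_mul]
      congr 1
      simp [dot2]
      ring
    · simp only [pauliOf, Matrix.of_apply, Matrix.smul_apply, e, h, if_false]
      simp
  · intro k _ hk
    simp [pauliOf, hk]
  · simp

lemma commute_pauliOf_iff (a b : PhaseSpace p) :
    Commute (pauliOf a) (pauliOf b) ↔ sympl p a b = 0 := by
  rw [commute_iff_eq, pauliOf_mul, pauliOf_mul, add_comm b a,
    (smul_left_injective ℂ (pauliOf_ne_zero (a + b))).eq_iff, ZMod.injective_stdAddChar.eq_iff,
    sympl_apply, sub_eq_zero]

end Operators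

/-! ### Isotropic sets -/

section Symplectic

variable {p : ℕ} [Fact p.Prime]

lemma sympl_isRefl : (sympl p).IsRefl := by
  intro a b h
  rw [sympl_swap, h, neg_zero]

lemma sympl_nondegenerate : (sympl p).Nondegenerate := by
  refine (LinearMap.IsRefl.nondegenerate_iff_separatingLeft (B := sympl p) sympl_isRefl).2 ?_
  intro a h
  have h1 := h ((1, 0), 0)
  have h2 := h ((0, 1), 0)
  have h3 := h (0, (1, 0))
  have h4 := h (0, (0, 1))
  simp [sympl_apply, dot2] at h1 h2 h3 h4
  ext <;> simp [*]

/-- An isotropic set spans an isotropic subspace `W`; since `W` lies in its own orthogonal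
complement, of dimension `4 - dim W`, its dimension is at most two. -/
lemma isotropic_span_ncard_le (S : Set (PhaseSpace p))
    (hS : ∀ a ∈ S, ∀ b ∈ S, sympl p a b = 0) :
    (Submodule.span (ZMod p) S : Set (PhaseSpace p)).ncard ≤ p ^ 2 := by
  set W := Submodule.span (ZMod p) S
  have hW : W ≤ (sympl p).orthogonal W := by
    refine Submodule.span_le.2 fun b hb => ?_
    intro a ha
    change sympl p a b = 0
    induction ha using Submodule.span_induction with
    | mem x hx => exact hS x hx b hb
    | zero => simp
    | add x y _ _ hx hy => simp [hx, hy]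
    | smul c x _ hx => simp [hx]
  have h1 := Submodule.finrank_mono hW
  have h2 := LinearMap.BilinForm.finrank_orthogonal (B := sympl p) sympl_nondegenerate W
  have h3 : Module.finrank (ZMod p) (PhaseSpace p) = 4 := by simp
  have h4 : Module.finrank (ZMod p) W ≤ 2 := by omega
  have h5 : Nat.card W = p ^ Module.finrank (ZMod p) W := by
    rw [Module.natCard_eq_pow_finrank (K := ZMod p), Nat.card_zmod]
  calc (W : Set (PhaseSpace p)).ncard = Nat.card W := rfl
    _ ≤ p ^ 2 := h5 ▸ Nat.pow_le_pow_right (Fact.out : p.Prime).pos h4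

/-- An isotropic set has at most as many elements as a Lagrangian plane. -/
lemma isotropic_ncard_le (S : Set (PhaseSpace p))
    (hS : ∀ a ∈ S, ∀ b ∈ S, sympl p a b = 0) : S.ncard ≤ p ^ 2 :=
  (Set.ncard_le_ncard Submodule.subset_span).trans (isotropic_span_ncard_le S hS)

/-- A vector outside a Lagrangian plane is orthogonal to exactly a line of that plane. -/
lemma ncard_orthogonal_inter (A : Set (PhaseSpace p))
    (hA : ∀ a ∈ A, ∀ b ∈ A, sympl p a b = 0) (hcard : A.ncard = p ^ 2)
    (u : PhaseSpace p) (hu : u ∉ A) : {v ∈ A | sympl p u v = 0}.ncard = p := by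
  set W := Submodule.span (ZMod p) A with hWdef
  have hAW : A = W :=
    Set.eq_of_subset_of_ncard_le Submodule.subset_span (hcard ▸ isotropic_span_ncard_le A hA)
  let f : Module.Dual (ZMod p) W := (sympl p u).comp W.subtype
  have hf : f ≠ 0 := by
    intro h0
    have hzero : ∀ v ∈ A, sympl p u v = 0 := fun v hv =>
      LinearMap.congr_fun h0 ⟨v, Submodule.subset_span hv⟩
    have hle := isotropic_ncard_le (insert u A) (by
      rintro a (rfl | ha) b (rfl | hb)
      · exact sympl_self _
      · exact hzero b hb
      · rw [sympl_swap, hzero a ha, neg_zero]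
      · exact hA a ha b hb)
    rw [Set.ncard_insert_of_notMem hu, hcard] at hle
    omega
  have hp1 : 1 < p := (Fact.out : p.Prime).one_lt
  have hW2 : Module.finrank (ZMod p) W = 2 := by
    have h5 : Nat.card W = p ^ Module.finrank (ZMod p) W := by
      rw [Module.natCard_eq_pow_finrank (K := ZMod p), Nat.card_zmod]
    have h6 : Nat.card W = p ^ 2 := by
      rw [← hcard]
      conv_rhs => rw [hAW]
      rfl
    exact Nat.pow_right_injective hp1 (h5.symm.trans h6)
  have hker := Module.Dual.finrank_ker_add_one_of_ne_zero hf
  have hker1 : Module.finrank (ZMod p) (LinearMap.ker f) = 1 := by omega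
  have himg : {v ∈ A | sympl p u v = 0} = W.subtype '' (LinearMap.ker f : Set W) := by
    ext v
    constructor
    · rintro ⟨hv, h0⟩
      exact ⟨⟨v, Submodule.subset_span hv⟩, h0, rfl⟩
    · rintro ⟨w, hw, rfl⟩
      exact ⟨by rw [hAW]; exact w.2, hw⟩
  rw [himg, Set.ncard_image_of_injective _ W.injective_subtype]
  change Nat.card (LinearMap.ker f) = p
  rw [Module.natCard_eq_pow_finrank (K := ZMod p), Nat.card_zmod, hker1, pow_one]

end Symplectic

/-! ### Commuting classes -/

/-- If C₁, C₂ are disjoint maximal commuting classes, every U ∈ C₁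
commutes with exactly p − 1 elements of C₂. -/
theorem stmt2 (p : ℕ) [NeZero p] (hp : p.Prime) (C₁ C₂ : Set (PauliMat p))
    (h₁ : MaxCommClass p C₁) (h₂ : MaxCommClass p C₂) (hd : Disjoint C₁ C₂)
    (U : PauliMat p) (hU : U ∈ C₁) :
    {V ∈ C₂ | Commute U V}.ncard = p - 1 := by
  have : Fact p.Prime := ⟨hp⟩
  obtain ⟨hsub, hcard, hcomm⟩ := h₂
  obtain ⟨hUP, hU1⟩ := h₁.1 hU
  rw [pauliSet_eq_range] at hUP
  obtain ⟨u, rfl⟩ := hUP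
  have hrange : C₂ ⊆ Set.range (pauliOf (p := p)) := fun V hV =>
    pauliSet_eq_range (p := p) ▸ (hsub hV).1
  have h0 : (0 : PhaseSpace p) ∉ pauliOf ⁻¹' C₂ := fun h =>
    (hsub h).2 pauliOf_zero
  have hAcard : (insert 0 (pauliOf ⁻¹' C₂) : Set (PhaseSpace p)).ncard = p ^ 2 := by
    rw [Set.ncard_insert_of_notMem h0,
      Set.ncard_preimage_of_injective_subset_range pauliOf_injective hrange, hcard]
    exact Nat.sub_add_cancel (Nat.pow_pos hp.pos)
  have hmain := ncard_orthogonal_inter (insert 0 (pauliOf ⁻¹' C₂)) (by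
      rintro a (rfl | ha) b (rfl | hb)
      · simp
      · simp
      · simp
      · exact (commute_pauliOf_iff a b).1 (hcomm _ ha _ hb)) hAcard u (by
      rintro (rfl | hu)
      · exact hU1 pauliOf_zero
      · exact Set.disjoint_left.1 hd hU hu)
  have himg : {V ∈ C₂ | Commute (pauliOf u) V}
      = pauliOf '' ({v ∈ insert 0 (pauliOf ⁻¹' C₂) | sympl p u v = 0} \ {0}) := by
    ext V
    constructor
    · rintro ⟨hV, hc⟩
      obtain ⟨v, rfl⟩ := hrange hV
      refine ⟨v, ⟨⟨Or.inr hV, (commute_pauliOf_iff u v).1 hc⟩, ?_⟩, rfl⟩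
      rintro rfl
      exact h0 hV
    · rintro ⟨v, ⟨⟨hv, hc⟩, hv0⟩, rfl⟩
      exact ⟨hv.resolve_left hv0, (commute_pauliOf_iff u v).2 hc⟩
  rw [himg, Set.ncard_image_of_injective _ pauliOf_injective,
    Set.ncard_sdiff_singleton_of_mem (by simp), hmain]
end
end
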